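/- arXiv:math/0610326 — 2 statements merged into one kernel-verified Lean document; each statement's English description precedes it below -/
import Mathlib

section
/- Assume a := ess sup ξ₀ < ∞ and Q{ξ₀⁻ > λ} ≤ 1/(log λ)^{2+ε} for all large λ. Set j_k := k^{3k}. Then there exists a constant c > 0 such that for P-almost all ω: liminf_{k→∞} [ ∏_{i=0}^{M(j_k)−2} Q{max_{x∈Θ_i(j_k)} ξ_x⁻ < ε_i(j_k)^{−1/2}} ] · Q{max ξ_x⁻ < ε_{−1}(j_k)^{−1/2}, the max over x ∈ Θ_{−1}(j_k) \ [d⁻(j_{k−1}), d⁺(j_{k−1})]} ≥ c. -/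
open MeasureTheory ProbabilityTheory Filter Set

noncomputable section SinaiSceneryDefs

/-- `γ_i(j) := j^((1-α)^i)`. -/
def gamScale (α : ℝ) (j : ℝ) (i : ℕ) : ℝ := j ^ ((1 - α) ^ i)

/-- `M(j) := inf{n ≥ 0 : γ_n(j) ≤ (log log j)^((1-α)/(2+ε'))}`. -/
def bigM (α ε' : ℝ) (j : ℝ) : ℕ :=
  sInf {n : ℕ | gamScale α j n ≤ (Real.log (Real.log j)) ^ ((1 - α) / (2 + ε'))}

/-- `ε_i(j) := exp(−c₄ γ_{i+2}(j))` for `i ≥ 0` (and `ε_{-1}(j) := ε₀(j)`). -/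
def epsScale (α c₄ : ℝ) (j : ℝ) (i : ℕ) : ℝ := Real.exp (-(c₄ * gamScale α j (i + 2)))

/-- `d⁺(j) := min{n ≥ 0 : V(n) ≥ j}`. -/
def dPlus (v : ℤ → ℝ) (j : ℝ) : ℕ := sInf {n : ℕ | j ≤ v n}

/-- `b⁺(j) := min{n ≥ 0 : V(n) = min_{0 ≤ x ≤ d⁺(j)} V(x)}`. -/
def bPlus (v : ℤ → ℝ) (j : ℝ) : ℕ := sInf {n : ℕ | ∀ m : ℕ, m ≤ dPlus v j → v n ≤ v m}

/-- `ν⁺((−∞,−j]) := min{n ≥ 0 : V(n) ≤ −j}`. -/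
def nuMinus (v : ℤ → ℝ) (j : ℝ) : ℕ := sInf {n : ℕ | v n ≤ -j}

/-- `|d⁻(j)|`, where `d⁻(j) := max{n ≤ 0 : V(n) ≥ j}`. -/
def dMinusAbs (v : ℤ → ℝ) (j : ℝ) : ℕ := sInf {m : ℕ | j ≤ v (-(m : ℤ))}

/-- `|b⁻(j)|`, where `b⁻(j) := max{n ≤ 0 : V(n) = min_{d⁻(j) ≤ x ≤ 0} V(x)}`. -/
def bMinusAbs (v : ℤ → ℝ) (j : ℝ) : ℕ :=
  sInf {m : ℕ | ∀ k : ℕ, k ≤ dMinusAbs v j → v (-(m : ℤ)) ≤ v (-(k : ℤ))}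

/-- The interval of half-width `c·γ_i(j)^{2+ε'}` around `b⁺(j)`, with constant
`c = c₅` for the innermost scale `i = M(j)−1` and `c = c₆` otherwise. -/
def thetaBall (α ε' c₅ c₆ : ℝ) (v : ℤ → ℝ) (j : ℝ) (i : ℕ) : Set ℤ :=
  {x : ℤ | |(x : ℝ) - (bPlus v j : ℝ)| ≤
    (if i = bigM α ε' j - 1 then c₅ else c₆) * gamScale α j i ^ (2 + ε')}

/-- `Θ̄_i(j)`: the `i`-th annulus around `b⁺(j)` (the ball at scale `i` minus the
balls at the finer scales `i+1, …, M(j)−1`). -/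
def thetaBar (α ε' c₅ c₆ : ℝ) (v : ℤ → ℝ) (j : ℝ) (i : ℕ) : Set ℤ :=
  thetaBall α ε' c₅ c₆ v j i \ ⋃ p ∈ Finset.Ioo i (bigM α ε' j), thetaBall α ε' c₅ c₆ v j p

/-- `Θ_i(j) := Θ̄_i(j) ∩ I(j)` with `I(j) = [ν⁺((−∞,−j]), d⁺(j)]`. -/
def thetaSet (α ε' c₅ c₆ : ℝ) (v : ℤ → ℝ) (j : ℝ) (i : ℕ) : Set ℤ :=
  thetaBar α ε' c₅ c₆ v j i ∩ {x : ℤ | (nuMinus v j : ℤ) ≤ x ∧ x ≤ (dPlus v j : ℤ)}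

/-- `Θ_{−1}(j) := [−j^{2+ε'}, j^{2+ε'}] ∩ [d⁻(j), ν⁺((−∞,−j])]`. -/
def thetaNeg (ε' : ℝ) (v : ℤ → ℝ) (j : ℝ) : Set ℤ :=
  {x : ℤ | -(j ^ (2 + ε')) ≤ (x : ℝ) ∧ (x : ℝ) ≤ j ^ (2 + ε') ∧
    -(dMinusAbs v j : ℤ) ≤ x ∧ x ≤ (nuMinus v j : ℤ)}

/-- `A₁^env(j) := {−4j ≤ V(b⁺(j)) ≤ −3j}`. -/
def A1env (v : ℤ → ℝ) (j : ℝ) : Prop := -4 * j ≤ v (bPlus v j) ∧ v (bPlus v j) ≤ -3 * j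

/-- `A₂^env(j) := {max_{0≤x≤y≤b⁺(j)} (V(y)−V(x)) ≤ j/4}`. -/
def A2env (v : ℤ → ℝ) (j : ℝ) : Prop :=
  ∀ x y : ℕ, x ≤ y → y ≤ bPlus v j → v y - v x ≤ j / 4

/-- `A_ann^env(j) := ∩_{i=0}^{M(j)−2} {∑_{x∈Θ_i(j)} e^{−(V(x)−V(b⁺(j)))} ≤ ε_i(j)²}`. -/
def AannEnv (α ε' c₄ c₅ c₆ : ℝ) (v : ℤ → ℝ) (j : ℝ) : Prop :=
  ∀ i : ℕ, i + 2 ≤ bigM α ε' j →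
    ∑' x : thetaSet α ε' c₅ c₆ v j i, Real.exp (-(v x - v (bPlus v j)))
      ≤ epsScale α c₄ j i ^ 2

/-- `B^env(j) := {V(b⁻(j)) ≤ −j/6, max_{d⁻(j)≤x≤y≤0} (V(y)−V(x)) ≤ j/3}`. -/
def Benv (v : ℤ → ℝ) (j : ℝ) : Prop :=
  v (-(bMinusAbs v j : ℤ)) ≤ -j / 6 ∧
    ∀ x y : ℤ, -(dMinusAbs v j : ℤ) ≤ x → x ≤ y → y ≤ 0 → v y - v x ≤ j / 3

/-- `A_i^sce(j) := {max_{x∈Θ_i(j)} ξ_x⁻ < ε_i(j)^{−1/2}}`, `0 ≤ i ≤ M(j)−2`. -/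
def AsceI (α ε' c₄ c₅ c₆ : ℝ) (v ξ : ℤ → ℝ) (j : ℝ) (i : ℕ) : Prop :=
  ∀ x ∈ thetaSet α ε' c₅ c₆ v j i, max (-(ξ x)) 0 < epsScale α c₄ j i ^ (-(1 / 2) : ℝ)

/-- `A_{−1}^sce(j) := {max_{x∈Θ_{−1}(j)} ξ_x⁻ < ε_{−1}(j)^{−1/2}}`. -/
def AsceNeg (α ε' c₄ : ℝ) (v ξ : ℤ → ℝ) (j : ℝ) : Prop :=
  ∀ x ∈ thetaNeg ε' v j, max (-(ξ x)) 0 < epsScale α c₄ j 0 ^ (-(1 / 2) : ℝ)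

/-- `A_{M(j)−1}^sce(j) := {min_{x∈Θ_{M(j)−1}(j)} ξ_x ≥ a − ρ}`. -/
def AsceTop (α ε' c₅ c₆ a ρ : ℝ) (v ξ : ℤ → ℝ) (j : ℝ) : Prop :=
  ∀ x ∈ thetaSet α ε' c₅ c₆ v j (bigM α ε' j - 1), a - ρ ≤ ξ x

/-- The ``good environment-scenery'' event `A(j)`. -/
def goodPair (α ε' c₄ c₅ c₆ a ρ : ℝ) (v ξ : ℤ → ℝ) (j : ℝ) : Prop :=
  A1env v j ∧ A2env v j ∧ AannEnv α ε' c₄ c₅ c₆ v j ∧ Benv v j ∧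
    AsceNeg α ε' c₄ v ξ j ∧
    (∀ i : ℕ, i + 2 ≤ bigM α ε' j → AsceI α ε' c₄ c₅ c₆ v ξ j i) ∧
    AsceTop α ε' c₅ c₆ a ρ v ξ j

end SinaiSceneryDefs

/-- `E_{−1}^sce(j_k)`: the scenery is controlled on
`Θ_{−1}(j_k) \ [d⁻(j_{k−1}), d⁺(j_{k−1})]`. -/
def EsceNeg (α ε' c₄ : ℝ) (v ξ : ℤ → ℝ) (j jprev : ℝ) : Prop :=
  ∀ x ∈ thetaNeg ε' v j,
    ¬(-(dMinusAbs v jprev : ℤ) ≤ x ∧ x ≤ (dPlus v jprev : ℤ)) →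
      max (-(ξ x)) 0 < epsScale α c₄ j 0 ^ (-(1 / 2) : ℝ)

/-- Integer balls of radius `R` are finite with at most `2R+1` points. -/
lemma aux_ball_card (b R : ℝ) (hR : 0 ≤ R) :
    ∃ F : Finset ℤ, (∀ x : ℤ, |(x : ℝ) - b| ≤ R → x ∈ F) ∧ (F.card : ℝ) ≤ 2 * R + 1 := by
  refine ⟨Finset.Icc ⌈b - R⌉ ⌊b + R⌋, ?_, ?_⟩
  · intro x hx
    rw [abs_le] at hx
    rw [Finset.mem_Icc]
    constructor
    · apply Int.ceil_le.2; linarith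
    · apply Int.le_floor.2; linarith
  · rw [Int.card_Icc]
    have h1 := Int.floor_le (b + R)
    have h2 := Int.le_ceil (b - R)
    have h3 : (((⌊b + R⌋ + 1 - ⌈b - R⌉).toNat : ℤ) : ℝ)
        = ((max (⌊b + R⌋ + 1 - ⌈b - R⌉) 0 : ℤ) : ℝ) := by rw [Int.toNat_eq_max]
    have h4 : ((⌊b + R⌋ + 1 - ⌈b - R⌉).toNat : ℝ)
        = (((⌊b + R⌋ + 1 - ⌈b - R⌉).toNat : ℤ) : ℝ) := by push_cast; rfl
    rw [h4, h3]
    push_cast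
    apply max_le <;> linarith

/-- Union bound for the scenery on a ball. -/
lemma aux_scene {Ω₂ : Type*} [MeasurableSpace Ω₂]
    (μQ : Measure Ω₂) [IsProbabilityMeasure μQ]
    (sce : ℤ → Ω₂ → ℝ)
    (hsce_ident : ∀ x, IdentDistrib (sce x) (sce 0) μQ μQ)
    (ε : ℝ) (lam₀ : ℝ) (hlam₀ : 1 < lam₀)
    (htail : ∀ lam : ℝ, lam₀ ≤ lam →
      (μQ {ω | lam < max (-(sce 0 ω)) 0}).toReal ≤ 1 / Real.log lam ^ (2 + ε : ℝ))
    (ε' α c₄ c : ℝ) (hε' : 0 < ε') (hc₄ : 0 < c₄) (hc : 1 ≤ c)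
    (hβ : 0 < (1 - α) ^ 2 * (2 + ε) - (2 + ε'))
    (g : ℝ) (hg : 1 < g) (hlam : Real.log lam₀ ≤ c₄ * g ^ ((1 - α) ^ 2) / 4)
    (A : Set Ω₂) (b : ℝ)
    (hA : {ω | ∀ x : ℤ, |(x : ℝ) - b| ≤ c * g ^ (2 + ε') →
      max (-(sce x ω)) 0 < Real.exp (c₄ * g ^ ((1 - α) ^ 2) / 2)} ⊆ A) :
    1 - (3 * c * (4 / c₄) ^ (2 + ε) / ((1 - α) ^ 2 * (2 + ε) - (2 + ε'))) / Real.log g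
      ≤ (μQ A).toReal := by
  have hg0 : 0 < g := by linarith
  set G := g ^ ((1 - α) ^ 2) with hG
  have hGpos : 0 < G := Real.rpow_pos_of_pos hg0 _
  set β := (1 - α) ^ 2 * (2 + ε) - (2 + ε') with hβdef
  have hgp : 1 ≤ g ^ (2 + ε') := Real.one_le_rpow hg.le (by linarith)
  obtain ⟨F, hF, hcard⟩ := aux_ball_card b (c * g ^ (2 + ε')) (by positivity)
  set p : ℝ := 1 / (c₄ * G / 4) ^ (2 + ε) with hp
  have hx : ∀ x : ℤ, μQ.real {ω | Real.exp (c₄ * G / 2) ≤ max (-(sce x ω)) 0} ≤ p := by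
    intro x
    have hms : MeasurableSet {y : ℝ | Real.exp (c₄ * G / 2) ≤ max (-y) 0} :=
      measurableSet_le measurable_const (by fun_prop)
    have h1 : μQ {ω | Real.exp (c₄ * G / 2) ≤ max (-(sce x ω)) 0}
        = μQ {ω | Real.exp (c₄ * G / 2) ≤ max (-(sce 0 ω)) 0} :=
      (hsce_ident x).measure_mem_eq hms
    have h2 := htail (Real.exp (c₄ * G / 4)) (by
      rw [← Real.log_le_iff_le_exp (by linarith)]; exact hlam)
    rw [Real.log_exp] at h2
    rw [measureReal_def, h1]
    refine le_trans (measureReal_mono (μ := μQ) ?_) h2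
    intro ω hω
    have : Real.exp (c₄ * G / 4) < Real.exp (c₄ * G / 2) := by
      apply Real.exp_lt_exp.2
      have := mul_pos hc₄ hGpos
      linarith
    exact lt_of_lt_of_le this hω
  have hcompl : μQ.real Aᶜ ≤ F.card * p := by
    calc μQ.real Aᶜ
        ≤ μQ.real (⋃ x ∈ F, {ω | Real.exp (c₄ * G / 2) ≤ max (-(sce x ω)) 0}) := by
          apply measureReal_mono _ (measure_ne_top _ _)
          intro ω hω
          by_contra hcon
          apply hω
          apply hA
          intro x hxb
          by_contra h
          apply hcon
          simp only [Set.mem_iUnion]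
          exact ⟨x, hF x hxb, not_lt.1 h⟩
      _ ≤ ∑ x ∈ F, μQ.real {ω | Real.exp (c₄ * G / 2) ≤ max (-(sce x ω)) 0} :=
          measureReal_biUnion_finset_le _ _
      _ ≤ ∑ x ∈ F, p := Finset.sum_le_sum fun x _ => hx x
      _ = F.card * p := by simp
  have hone : 1 ≤ μQ.real A + μQ.real Aᶜ := by
    have := measureReal_union_le (μ := μQ) A Aᶜ
    rw [Set.union_compl_self] at this
    simpa using this
  have hppos : 0 ≤ p := by positivity
  have hpe : p = (4 / c₄) ^ (2 + ε) * (g ^ ((1 - α) ^ 2 * (2 + ε)))⁻¹ := by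
    rw [hp, one_div, Real.rpow_mul hg0.le, ← hG, ← Real.inv_rpow (by positivity),
      ← Real.inv_rpow (by positivity), ← Real.mul_rpow (by positivity) (by positivity)]
    congr 1
    field_simp
  have hprod : g ^ (2 + ε') * (g ^ ((1 - α) ^ 2 * (2 + ε)))⁻¹ ≤ 1 / (β * Real.log g) := by
    have hlg : 0 < Real.log g := Real.log_pos hg
    rw [← Real.rpow_neg hg0.le, ← Real.rpow_add hg0,
      show 2 + ε' + -((1 - α) ^ 2 * (2 + ε)) = -β by rw [hβdef]; ring,
      Real.rpow_neg hg0.le, one_div]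
    apply inv_anti₀ (by positivity)
    rw [Real.rpow_def_of_pos hg0]
    have := Real.add_one_le_exp (Real.log g * β)
    linarith
  have hfin : F.card * p ≤ (3 * c * (4 / c₄) ^ (2 + ε) / β) / Real.log g := by
    have hq : 0 ≤ (4 / c₄) ^ (2 + ε) := by positivity
    calc F.card * p ≤ (3 * c * g ^ (2 + ε')) * p := by
          apply mul_le_mul_of_nonneg_right _ hppos
          nlinarith
      _ = (3 * c * (4 / c₄) ^ (2 + ε)) * (g ^ (2 + ε') * (g ^ ((1 - α) ^ 2 * (2 + ε)))⁻¹) := by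
          rw [hpe]; ring
      _ ≤ (3 * c * (4 / c₄) ^ (2 + ε)) * (1 / (β * Real.log g)) :=
          mul_le_mul_of_nonneg_left hprod (by positivity)
      _ = _ := by rw [div_div]; ring
  change _ ≤ μQ.real A
  linarith

lemma aux_prod (n : ℕ) (f e : ℕ → ℝ) (h0 : ∀ i, 0 ≤ f i) (h1 : ∀ i, f i ≤ 1)
    (h : ∀ i < n, 1 - e i ≤ f i) :
    1 - ∑ i ∈ Finset.range n, e i ≤ ∏ i ∈ Finset.range n, f i ∧
      ∏ i ∈ Finset.range n, f i ≤ 1 := by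
  induction n with
  | zero => simp
  | succ n ih =>
    obtain ⟨ih1, ih2⟩ := ih fun i hi => h i (by omega)
    rw [Finset.sum_range_succ, Finset.prod_range_succ]
    have := h n (by omega)
    have h3 : 0 ≤ ∏ i ∈ Finset.range n, f i := Finset.prod_nonneg fun i _ => h0 i
    have a0 := h0 n
    have a1 := h1 n
    constructor <;> nlinarith

lemma aux_geom (α K L : ℝ) (hα0 : 0 < α) (hα1 : α < 1) (hK : 0 ≤ K) (hL : 0 < L) (n : ℕ) :
    ∑ i ∈ Finset.range n, K / (L * (1 - α) ^ i) ≤ K / α / (L * (1 - α) ^ n) := by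
  have hr : 0 < 1 - α := by linarith
  induction n with
  | zero => simp; positivity
  | succ n ih =>
    rw [Finset.sum_range_succ]
    have hp : 0 < L * (1 - α) ^ n := by positivity
    refine (add_le_add_left ih _).trans ?_
    rw [pow_succ, ← mul_assoc]
    generalize L * (1 - α) ^ n = D at hp
    rw [div_div, div_div, div_add_div _ _ (by positivity) (by positivity),
      div_le_div_iff₀ (by positivity) (by positivity)]
    have : 0 ≤ K * D * D * α * α * α := by positivity
    nlinarith [this]

lemma aux_eps (α c₄ j : ℝ) (hj : 0 < j) (i : ℕ) :
    epsScale α c₄ j i ^ (-(1 / 2) : ℝ)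
      = Real.exp (c₄ * gamScale α j i ^ ((1 - α) ^ 2) / 2) := by
  unfold epsScale gamScale
  rw [← Real.exp_mul, ← Real.rpow_mul hj.le, ← pow_add]
  congr 1
  ring

/-- The quantitative bound at one scale `j`. -/
lemma aux_main {Ω₂ : Type*} [MeasurableSpace Ω₂]
    (μQ : Measure Ω₂) [IsProbabilityMeasure μQ]
    (sce : ℤ → Ω₂ → ℝ)
    (hsce_ident : ∀ x, IdentDistrib (sce x) (sce 0) μQ μQ)
    (ε : ℝ) (lam₀ : ℝ) (hlam₀ : 1 < lam₀)
    (htail : ∀ lam : ℝ, lam₀ ≤ lam →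
      (μQ {ω | lam < max (-(sce 0 ω)) 0}).toReal ≤ 1 / Real.log lam ^ (2 + ε : ℝ))
    (ε' α c₄ c₅ c₆ : ℝ) (hε' : 0 < ε') (hc₄ : 0 < c₄) (hc₅ : c₅ < 1) (hc₆ : 1 ≤ c₆)
    (hα0 : 0 < α) (hα1 : α < 1)
    (hβ : 0 < (1 - α) ^ 2 * (2 + ε) - (2 + ε'))
    (v : ℤ → ℝ) (j jprev S K : ℝ) (hj : 1 < j)
    (hS : S = (Real.log (Real.log j)) ^ ((1 - α) / (2 + ε')))
    (hK : K = 3 * c₆ * (4 / c₄) ^ (2 + ε) / ((1 - α) ^ 2 * (2 + ε) - (2 + ε')))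
    (hS1 : 1 < S) (hSK : 4 * (K / α) ≤ Real.log S) (hjK : 4 * K ≤ Real.log j)
    (hSl : Real.log lam₀ ≤ c₄ * S ^ (1 - α) / 4)
    (hjl : Real.log lam₀ ≤ c₄ * j ^ ((1 - α) ^ 2) / 4) :
    1 / 2 ≤ (∏ i ∈ Finset.range (bigM α ε' j - 1),
          (μQ {ω₂ | AsceI α ε' c₄ c₅ c₆ v (fun x => sce x ω₂) j i}).toReal) *
        (μQ {ω₂ | EsceNeg α ε' c₄ v (fun x => sce x ω₂) j jprev}).toReal := by
  have hj0 : 0 < j := by linarith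
  have hL : 0 < Real.log j := Real.log_pos hj
  have hr : 0 < 1 - α := by linarith
  have hKpos : 0 ≤ K := by
    rw [hK]
    have : 0 ≤ (4 / c₄) ^ (2 + ε) := by positivity
    exact div_nonneg (mul_nonneg (by linarith) this) hβ.le
  have hlogg : ∀ i, Real.log (gamScale α j i) = Real.log j * (1 - α) ^ i := by
    intro i
    unfold gamScale
    rw [Real.log_rpow hj0, mul_comm]
  have hg1 : ∀ i, 1 < gamScale α j i := fun i => Real.one_lt_rpow hj (by positivity)
  have hM : ∀ i < bigM α ε' j - 1, S < gamScale α j (i + 1) := by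
    intro i hi
    have h := Nat.notMem_of_lt_sInf (show i + 1 < bigM α ε' j by omega)
    rw [Set.mem_setOf_eq, not_le, ← hS] at h
    exact h
  have hneg : 3 / 4 ≤ (μQ {ω₂ | EsceNeg α ε' c₄ v (fun x => sce x ω₂) j jprev}).toReal := by
    have h := aux_scene μQ sce hsce_ident ε lam₀ hlam₀ htail ε' α c₄ c₆ hε' hc₄ hc₆ hβ j hj hjl
      {ω₂ | EsceNeg α ε' c₄ v (fun x => sce x ω₂) j jprev} 0 (by
        intro ω hω x hx _
        rw [aux_eps α c₄ j hj0]
        have hg : gamScale α j 0 = j := by simp [gamScale]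
        rw [hg]
        apply hω
        have h1 : 0 < j ^ (2 + ε') := Real.rpow_pos_of_pos hj0 _
        rw [sub_zero, abs_le]
        obtain ⟨ha, hb, _⟩ := hx
        constructor <;> nlinarith)
    rw [← hK] at h
    have : K / Real.log j ≤ 1 / 4 := by
      rw [div_le_iff₀ hL]; linarith
    linarith
  have hI : ∀ i < bigM α ε' j - 1, 1 - K / (Real.log j * (1 - α) ^ i) ≤
      (μQ {ω₂ | AsceI α ε' c₄ c₅ c₆ v (fun x => sce x ω₂) j i}).toReal := by
    intro i hi
    have hpow : gamScale α j i ^ ((1 - α) ^ 2) = gamScale α j (i + 1) ^ (1 - α) := by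
      unfold gamScale
      rw [← Real.rpow_mul hj0.le, ← Real.rpow_mul hj0.le]
      congr 1
      ring
    have h := aux_scene μQ sce hsce_ident ε lam₀ hlam₀ htail ε' α c₄ c₆ hε' hc₄ hc₆ hβ
      (gamScale α j i) (hg1 i) (by
        rw [hpow]
        have h2 : S ^ (1 - α) ≤ gamScale α j (i + 1) ^ (1 - α) :=
          Real.rpow_le_rpow (by linarith) (hM i hi).le hr.le
        nlinarith)
      {ω₂ | AsceI α ε' c₄ c₅ c₆ v (fun x => sce x ω₂) j i} (bPlus v j) (by
        intro ω hω x hx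
        rw [aux_eps α c₄ j hj0]
        apply hω
        have hb : |(x : ℝ) - (bPlus v j : ℝ)| ≤
          (if i = bigM α ε' j - 1 then c₅ else c₆) * gamScale α j i ^ (2 + ε') := hx.1.1
        rwa [if_neg (by omega)] at hb)
    rwa [← hK, hlogg] at h
  obtain ⟨hp1, hp2⟩ := aux_prod (bigM α ε' j - 1)
    (fun i => (μQ {ω₂ | AsceI α ε' c₄ c₅ c₆ v (fun x => sce x ω₂) j i}).toReal)
    (fun i => K / (Real.log j * (1 - α) ^ i)) (fun i => ENNReal.toReal_nonneg)
    (fun i => measureReal_le_one) hI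
  have hsum : ∑ i ∈ Finset.range (bigM α ε' j - 1), K / (Real.log j * (1 - α) ^ i) ≤ 1 / 4 := by
    rcases Nat.eq_zero_or_pos (bigM α ε' j - 1) with h0 | h0
    · rw [h0]; norm_num
    · refine (aux_geom α K (Real.log j) hα0 hα1 hKpos hL _).trans ?_
      have h1 := hM (bigM α ε' j - 1 - 1) (by omega)
      rw [Nat.sub_add_cancel h0] at h1
      have h2 := Real.log_lt_log (by linarith) h1
      rw [hlogg] at h2
      have h3 := Real.log_pos hS1
      rw [div_le_iff₀ (by linarith)]
      linarith
  have hfin : 3 / 4 ≤ ∏ i ∈ Finset.range (bigM α ε' j - 1),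
          (μQ {ω₂ | AsceI α ε' c₄ c₅ c₆ v (fun x => sce x ω₂) j i}).toReal := by linarith
  nlinarith

/-- Lemma 5.2: there is `c > 0` such that for `P`-almost all `ω`,
`liminf_{k→∞} ∏_{i=0}^{M(j_k)−2} Q{max_{x∈Θ_i(j_k)} ξ_x⁻ < ε_i(j_k)^{−1/2}}
· Q{max_{x ∈ Θ_{−1}(j_k) \ [d⁻(j_{k−1}), d⁺(j_{k−1})]} ξ_x⁻ < ε_{−1}(j_k)^{−1/2}} ≥ c`
(with `j_k := k^{3k}`). -/
theorem stmt14 {Ω₁ Ω₂ : Type*} [MeasurableSpace Ω₁] [MeasurableSpace Ω₂]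
    (μP : Measure Ω₁) [IsProbabilityMeasure μP]
    (μQ : Measure Ω₂) [IsProbabilityMeasure μQ]
    -- the i.i.d. environment
    (env : ℤ → Ω₁ → ℝ) (henv_meas : ∀ i, Measurable (env i))
    (henv_indep : iIndepFun (m := fun _ : ℤ => (inferInstance : MeasurableSpace ℝ)) env μP)
    (henv_ident : ∀ i, IdentDistrib (env i) (env 0) μP μP)
    (δ : ℝ) (hδ0 : 0 < δ) (hδ1 : δ < 1 / 2)
    (henv_ell : ∀ i, ∀ᵐ ω ∂μP, δ ≤ env i ω ∧ env i ω ≤ 1 - δ)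
    (henv_mean : ∫ ω, Real.log ((1 - env 0 ω) / env 0 ω) ∂μP = 0)
    (henv_var : 0 < variance (fun ω => Real.log ((1 - env 0 ω) / env 0 ω)) μP)
    -- the potential
    (V : ℤ → Ω₁ → ℝ)
    (hV_pos : ∀ (x : ℤ), 0 ≤ x → ∀ ω, V x ω =
      ∑ i ∈ Finset.range x.toNat, Real.log ((1 - env ((i : ℤ) + 1) ω) / env ((i : ℤ) + 1) ω))
    (hV_neg : ∀ (x : ℤ), x < 0 → ∀ ω, V x ω =
      -∑ i ∈ Finset.range (-x).toNat,
        Real.log ((1 - env (x + 1 + (i : ℤ)) ω) / env (x + 1 + (i : ℤ)) ω))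
    -- the i.i.d. scenery
    (sce : ℤ → Ω₂ → ℝ) (hsce_meas : ∀ x, Measurable (sce x))
    (hsce_indep : iIndepFun (m := fun _ : ℤ => (inferInstance : MeasurableSpace ℝ)) sce μQ)
    (hsce_ident : ∀ x, IdentDistrib (sce x) (sce 0) μQ μQ)
    -- `a := ess sup ξ₀ < ∞` and thin negative tails
    (a : ℝ) (ha : a = essSup (fun ω => sce 0 ω) μQ) (ha_fin : ∀ᵐ ω ∂μQ, sce 0 ω ≤ a)
    (ε : ℝ) (hε : 0 < ε) (lam₀ : ℝ) (hlam₀ : 1 < lam₀)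
    (htail : ∀ lam : ℝ, lam₀ ≤ lam →
      (μQ {ω | lam < max (-(sce 0 ω)) 0}).toReal ≤ 1 / Real.log lam ^ (2 + ε : ℝ))
    -- the scale parameters
    (ε' α c₄ c₅ c₆ : ℝ)
    (hε' : ε' = min (1 / 35) (ε / 2))
    (hα0 : 0 < α) (hα1 : α < 1)
    (hβ : 0 < (1 - α) ^ 2 * (2 + ε) - (2 + ε'))
    (hβ' : 0 < ε' / 2 - α)
    (hc₄0 : 0 < c₄) (hc₄1 : c₄ < 1 / 6)
    (hc₅0 : 0 < c₅) (hc₅1 : c₅ < 1)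
    (hc₆ : max 1 (2 * (1 + 2 / (2 + ε'))) ≤ c₆) :
    ∃ c : ℝ, 0 < c ∧ ∀ᵐ ω₁ ∂μP,
      c ≤ Filter.atTop.liminf (fun k : ℕ =>
        (∏ i ∈ Finset.range (bigM α ε' ((k : ℝ) ^ (3 * k)) - 1),
          (μQ {ω₂ | AsceI α ε' c₄ c₅ c₆ (fun x => V x ω₁) (fun x => sce x ω₂)
            ((k : ℝ) ^ (3 * k)) i}).toReal) *
        (μQ {ω₂ | EsceNeg α ε' c₄ (fun x => V x ω₁) (fun x => sce x ω₂)
          ((k : ℝ) ^ (3 * k)) (((k - 1 : ℕ) : ℝ) ^ (3 * (k - 1)))}).toReal) := by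
  have hε'0 : 0 < ε' := by rw [hε']; exact lt_min (by norm_num) (by linarith)
  have hc₆1 : 1 ≤ c₆ := (le_max_left _ _).trans hc₆
  have hr : 0 < 1 - α := by linarith
  refine ⟨1 / 2, by norm_num, Filter.Eventually.of_forall fun ω₁ => ?_⟩
  have hjt : Tendsto (fun k : ℕ => (k : ℝ) ^ (3 * k)) atTop atTop := by
    apply tendsto_atTop_mono' atTop _ tendsto_natCast_atTop_atTop
    filter_upwards [eventually_ge_atTop 1] with k hk
    exact le_self_pow₀ (by exact_mod_cast hk) (by omega)
  have hLt : Tendsto (fun k : ℕ => Real.log ((k : ℝ) ^ (3 * k))) atTop atTop :=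
    Real.tendsto_log_atTop.comp hjt
  have hSt : Tendsto (fun k : ℕ => (Real.log (Real.log ((k : ℝ) ^ (3 * k))))
      ^ ((1 - α) / (2 + ε'))) atTop atTop :=
    (tendsto_rpow_atTop (by positivity)).comp (Real.tendsto_log_atTop.comp hLt)
  have hlS := Real.tendsto_log_atTop.comp hSt
  have hSp := (tendsto_rpow_atTop hr).comp hSt
  have hjp := (tendsto_rpow_atTop (pow_pos hr 2)).comp hjt
  have hscale : ∀ z : ℝ, 4 * Real.log lam₀ / c₄ ≤ z → Real.log lam₀ ≤ c₄ * z / 4 := by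
    intro z hz
    rw [div_le_iff₀ hc₄0] at hz
    linarith
  apply le_liminf_of_le
  · apply IsBoundedUnder.isCoboundedUnder_ge
    refine isBoundedUnder_of ⟨1, fun k => ?_⟩
    refine mul_le_one₀ (Finset.prod_le_one (fun i _ => ENNReal.toReal_nonneg)
      (fun i _ => measureReal_le_one)) ENNReal.toReal_nonneg measureReal_le_one
  · filter_upwards [hjt.eventually_gt_atTop 1, hSt.eventually_gt_atTop 1,
      hlS.eventually_ge_atTop (4 * ((3 * c₆ * (4 / c₄) ^ (2 + ε) /
        ((1 - α) ^ 2 * (2 + ε) - (2 + ε'))) / α)),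
      hLt.eventually_ge_atTop (4 * (3 * c₆ * (4 / c₄) ^ (2 + ε) /
        ((1 - α) ^ 2 * (2 + ε) - (2 + ε')))),
      hSp.eventually_ge_atTop (4 * Real.log lam₀ / c₄),
      hjp.eventually_ge_atTop (4 * Real.log lam₀ / c₄)] with k h1 h2 h3 h4 h5 h6
    exact aux_main μQ sce hsce_ident ε lam₀ hlam₀ htail ε' α c₄ c₅ c₆ hε'0 hc₄0 hc₅1 hc₆1
      hα0 hα1 hβ (fun x => V x ω₁) _ _ _ _ h1 rfl rfl h2 h3 h4 (hscale _ h5) (hscale _ h6)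
end

section
/- Assume a := ess sup ξ₀ < ∞. Then for every c ∈ [−∞, +∞], the probability ℙ⊗Q{limsup_{n→∞} Z_n/n = c} is either 0 or 1. -/
open MeasureTheory ProbabilityTheory Filter Set

/-- Nearest-neighbour transition probability of Sinai's walk: from `x`, a step `s`
has probability `p` if `s = 1`, `1 − p` if `s = −1`, and `0` otherwise, where
`p = ω_x` is the environment at the current site. -/
noncomputable def stepProb (p : ℝ) (s : ℤ) : ℝ :=
  if s = 1 then p else if s = -1 then 1 - p else 0

open scoped ENNReal Topology

/-! ### limsup -/

lemma limsup_perturb_le (u v r d : ℕ → ℝ) (hr : Tendsto r atTop (𝓝 1)) (hd : Tendsto d atTop (𝓝 0))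
    (hv : ∀ᶠ n in atTop, v n = r n * u n + d n) :
    limsup (fun n => (v n : EReal)) atTop ≤ limsup (fun n => (u n : EReal)) atTop := by
  refine le_of_forall_gt_imp_ge_of_dense fun b hb => ?_
  obtain ⟨b', hb1, hb2⟩ := EReal.exists_between_coe_real hb
  have h1 : ∀ᶠ n in atTop, (u n : EReal) < b' := eventually_lt_of_limsup_lt hb1
  have h2 : Tendsto (fun n => r n * b' + d n) atTop (𝓝 b') := by
    simpa using (hr.mul_const b').add hd
  have h3 : Tendsto (fun n => ((r n * b' + d n : ℝ) : EReal)) atTop (𝓝 (b' : EReal)) :=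
    (continuous_coe_real_ereal.tendsto b').comp h2
  have h4 : ∀ᶠ n in atTop, ((r n * b' + d n : ℝ) : EReal) < b := h3.eventually_lt_const hb2
  have h5 : ∀ᶠ n in atTop, 0 < r n := hr.eventually_const_lt one_pos
  refine limsup_le_of_le (by isBoundedDefault) ?_
  filter_upwards [h1, h4, h5, hv] with n a1 a4 a5 a6
  refine le_trans ?_ a4.le
  rw [a6]
  have : u n ≤ b' := by exact_mod_cast a1.le
  have := mul_le_mul_of_nonneg_left this a5.le
  exact_mod_cast (by linarith)

lemma limsup_perturb_eq (u v r d : ℕ → ℝ) (hr : Tendsto r atTop (𝓝 1)) (hd : Tendsto d atTop (𝓝 0))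
    (hv : ∀ᶠ n in atTop, v n = r n * u n + d n) :
    limsup (fun n => (v n : EReal)) atTop = limsup (fun n => (u n : EReal)) atTop := by
  refine le_antisymm (limsup_perturb_le u v r d hr hd hv) ?_
  refine limsup_perturb_le v u (fun n => (r n)⁻¹) (fun n => - (r n)⁻¹ * d n) ?_ ?_ ?_
  · simpa using hr.inv₀ one_ne_zero
  · simpa using ((hr.inv₀ one_ne_zero).neg).mul hd
  · filter_upwards [hv, hr.eventually_const_lt one_pos] with n a b
    rw [a]; field_simp; ring

/-- the event for the path `p` in the scenery `s` -/
noncomputable def avgLim (s : ℤ → ℝ) (p : ℕ → ℤ) : EReal :=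
  limsup (fun n : ℕ => (((∑ i ∈ Finset.range (n + 1), s (p i)) / (n : ℝ) : ℝ) : EReal)) atTop

lemma avgLim_shift (s : ℤ → ℝ) (p : ℕ → ℤ) : avgLim s (fun i => p (i + 1)) = avgLim s p := by
  unfold avgLim
  rw [← limsup_nat_add (fun n : ℕ => (((∑ i ∈ Finset.range (n + 1), s (p i)) / (n : ℝ) : ℝ) : EReal)) 1]
  refine limsup_perturb_eq (fun n => (∑ i ∈ Finset.range (n + 1 + 1), s (p i)) / ((n + 1 : ℕ) : ℝ))
    _ (fun n => 1 + 1 / (n : ℝ)) (fun n => - (s (p 0)) / (n : ℝ)) ?_ ?_ ?_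
  · simpa using (tendsto_const_nhds (x := (1 : ℝ))).add tendsto_one_div_atTop_nhds_zero_nat
  · exact tendsto_const_div_atTop_nhds_zero_nat _
  · filter_upwards [eventually_gt_atTop 0] with n hn
    rw [Finset.sum_range_succ' (fun i => s (p i)) (n + 1)]
    have : (n : ℝ) ≠ 0 := by positivity
    push_cast
    field_simp
    ring

lemma avgLim_shift_n (s : ℤ → ℝ) (p : ℕ → ℤ) (n : ℕ) :
    avgLim s (fun i => p (n + i)) = avgLim s p := by
  induction n with
  | zero => simp
  | succ n ih =>
    rw [← ih, ← avgLim_shift s (fun i => p (n + i))]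
    congr 1; ext i; congr 1; ring

lemma avgLim_measurable : Measurable (fun q : (ℤ → ℝ) × (ℕ → ℤ) => avgLim q.1 q.2) := by
  unfold avgLim
  refine Measurable.limsup fun n => ?_
  refine measurable_coe_real_ereal.comp ?_
  refine Measurable.div_const ?_ _
  refine Finset.measurable_sum _ fun i _ => ?_
  have h : Measurable (fun q : (ℤ → ℝ) × ℤ => q.1 q.2) :=
    measurable_from_prod_countable_left fun z => measurable_pi_apply z
  exact h.comp (measurable_fst.prodMk ((measurable_pi_apply i).comp measurable_snd))

/-! ### harmonic functions -/

lemma harmonic_const (e h : ℤ → ℝ) (he : ∀ i, 0 < e i ∧ e i < 1) (hb : ∀ i, 0 ≤ h i ∧ h i ≤ 1)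
    (hh : ∀ i, h i = e i * h (i + 1) + (1 - e i) * h (i - 1))
    (hS : ¬ Tendsto (fun n : ℕ => ∑ k ∈ Finset.range n,
      Real.log ((1 - e ((k : ℤ) + 1)) / e ((k : ℤ) + 1))) atTop atBot) (x y : ℤ) : h x = h y := by
  have hstep : ∀ i, e i * (h (i + 1) - h i) = (1 - e i) * (h i - h (i - 1)) := by
    intro i; have := hh i; linarith
  have h01 : h 1 - h 0 = 0 := by
    by_contra hne
    apply hS
    have hd : ∀ n : ℕ, h ((n : ℤ) + 1) - h n = (h 1 - h 0) *
        Real.exp (∑ k ∈ Finset.range n, Real.log ((1 - e ((k : ℤ) + 1)) / e ((k : ℤ) + 1))) := by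
      intro n
      induction n with
      | zero => simp
      | succ n ih =>
        have h1 := he ((n : ℤ) + 1)
        rw [Finset.sum_range_succ, Real.exp_add, ← mul_assoc, ← ih, Real.exp_log
          (div_pos (by linarith) h1.1)]
        have h2 := hstep ((n : ℤ) + 1)
        rw [add_sub_cancel_right] at h2
        push_cast
        have := h1.1.ne'
        field_simp
        linarith
    set S := fun n : ℕ => ∑ k ∈ Finset.range n,
      Real.log ((1 - e ((k : ℤ) + 1)) / e ((k : ℤ) + 1)) with hSdef
    have hsum : Summable (fun n => Real.exp (S n)) := by
      refine summable_of_sum_range_le (c := 1 / |h 1 - h 0|) (fun n => (Real.exp_pos _).le) ?_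
      intro n
      have : ∑ i ∈ Finset.range n, (h ((i : ℤ) + 1) - h i) = h n - h 0 := by
        have := Finset.sum_range_sub (fun i : ℕ => h i) n
        simpa using this
      simp_rw [hd] at this
      rw [← Finset.mul_sum] at this
      have habs : |h 1 - h 0| * ∑ i ∈ Finset.range n, Real.exp (S i) = |h n - h 0| := by
        rw [← this, abs_mul, abs_of_nonneg (Finset.sum_nonneg fun i _ => (Real.exp_pos _).le)]
      rw [le_div_iff₀ (abs_pos.mpr hne), mul_comm, habs, abs_le]
      constructor <;> linarith [hb n, hb 0, (hb n).1, (hb n).2, (hb 0).1, (hb 0).2]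
    exact Real.tendsto_exp_comp_nhds_zero.mp hsum.tendsto_atTop_zero
  have hall : ∀ i : ℤ, h (i + 1) - h i = 0 := by
    intro i
    induction i using Int.induction_on with
    | zero => simpa using h01
    | succ n ih =>
      have h2 := hstep ((n : ℤ) + 1)
      rw [add_sub_cancel_right, ih, mul_zero] at h2
      exact (mul_eq_zero.mp h2).resolve_left (he _).1.ne'
    | pred n ih =>
      have h2 := hstep (-(n : ℤ))
      rw [ih, mul_zero] at h2
      have := (mul_eq_zero.mp h2.symm).resolve_left (by linarith [(he (-(n : ℤ))).2])
      simpa using this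
  have h0 : ∀ i : ℤ, h i = h 0 := by
    intro i
    induction i using Int.induction_on with
    | zero => rfl
    | succ n ih => linarith [hall n]
    | pred n ih => have := hall (-(n : ℤ) - 1); rw [sub_add_cancel] at this; linarith
  rw [h0 x, h0 y]

/-! ### walks -/

/-- cylinder sets of paths -/
def cyl (n : ℕ) (x : ℕ → ℤ) : Set (ℕ → ℤ) := {p | ∀ i ≤ n, p i = x i}

lemma cyl_measurable (n : ℕ) (x : ℕ → ℤ) : MeasurableSet (cyl n x) := by
  have : cyl n x = ⋂ i ∈ Finset.range (n + 1), (fun p : ℕ → ℤ => p i) ⁻¹' {x i} := by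
    ext p; simp [cyl]
  rw [this]
  exact Finset.measurableSet_biInter _ fun i _ => measurable_pi_apply i (measurableSet_singleton _)

/-- the collection of cylinders -/
def cyls : Set (Set (ℕ → ℤ)) := {C | ∃ n x, C = cyl n x}

lemma cyls_pi : IsPiSystem cyls := by
  rintro _ ⟨n, x, rfl⟩ _ ⟨k, z, rfl⟩ ⟨p, hp, hq⟩
  refine ⟨max n k, p, ?_⟩
  ext w
  constructor
  · rintro ⟨h1, h2⟩ i hi
    rcases le_max_iff.mp hi with h | h
    · rw [h1 i h, hp i h]
    · rw [h2 i h, hq i h]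
  · intro h
    exact ⟨fun i hi => by rw [h i (le_max_of_le_left hi), hp i hi],
      fun i hi => by rw [h i (le_max_of_le_right hi), hq i hi]⟩

lemma cyls_gen : (MeasurableSpace.pi : MeasurableSpace (ℕ → ℤ)) = MeasurableSpace.generateFrom cyls := by
  apply le_antisymm
  · refine iSup_le fun k => ?_
    rw [← measurable_iff_comap_le]
    refine @measurable_to_countable' _ _ _ _ (MeasurableSpace.generateFrom cyls) _ fun v => ?_
    have : (fun p : ℕ → ℤ => p k) ⁻¹' {v} = ⋃ f : {f : Fin (k + 1) → ℤ // f (Fin.last k) = v},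
        cyl k (fun i => if h : i < k + 1 then f.1 ⟨i, h⟩ else 0) := by
      ext p
      simp only [mem_preimage, mem_singleton_iff, mem_iUnion]
      constructor
      · intro hp
        refine ⟨⟨fun i => p i, by simpa using hp⟩, ?_⟩
        intro i hi
        simp [Nat.lt_succ_iff.mpr hi]
      · rintro ⟨⟨f, hf⟩, hp⟩
        have := hp k le_rfl
        simp at this
        rw [this, ← hf]; rfl
    rw [this]
    refine @MeasurableSet.iUnion _ _ (MeasurableSpace.generateFrom cyls) _ _ fun f => ?_
    exact MeasurableSpace.measurableSet_generateFrom ⟨_, _, rfl⟩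
  · refine MeasurableSpace.generateFrom_le ?_
    rintro _ ⟨n, x, rfl⟩
    exact cyl_measurable n x

lemma ext_cyl (m m' : Measure (ℕ → ℤ)) [IsFiniteMeasure m] (hu : m univ = m' univ)
    (h : ∀ n x, m (cyl n x) = m' (cyl n x)) : m = m' := by
  refine ext_of_generate_finite cyls cyls_gen cyls_pi ?_ hu
  rintro _ ⟨n, x, rfl⟩
  exact h n x

/-- `m` is the law of the walk in environment `e` started at `y` -/
structure IsWalk (m : Measure (ℕ → ℤ)) (e : ℤ → ℝ) (y : ℤ) : Prop where
  prob : IsProbabilityMeasure m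
  cyl_eq : ∀ (n : ℕ) (x : ℕ → ℤ), x 0 = y → m (cyl n x) =
    ENNReal.ofReal (∏ i ∈ Finset.range n, stepProb (e (x i)) (x (i + 1) - x i))

lemma IsWalk.start {m : Measure (ℕ → ℤ)} {e : ℤ → ℝ} {y : ℤ} (hm : IsWalk m e y)
    {n : ℕ} {x : ℕ → ℤ} (hx : x 0 ≠ y) : m (cyl n x) = 0 := by
  have := hm.prob
  have h1 := hm.cyl_eq 0 (fun _ => y) rfl
  simp only [Finset.range_zero, Finset.prod_empty, ENNReal.ofReal_one] at h1
  have h2 := (prob_compl_eq_zero_iff (cyl_measurable 0 (fun _ => y))).mpr h1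
  refine measure_mono_null ?_ h2
  intro p hp hp'
  exact hx ((hp 0 (Nat.zero_le _)).symm.trans (hp' 0 le_rfl))

lemma IsWalk.unique {m m' : Measure (ℕ → ℤ)} {e : ℤ → ℝ} {y : ℤ} (hm : IsWalk m e y)
    (hm' : IsWalk m' e y) : m = m' := by
  have := hm.prob
  have := hm'.prob
  refine ext_cyl m m' (by simp) fun n x => ?_
  by_cases hx : x 0 = y
  · rw [hm.cyl_eq n x hx, hm'.cyl_eq n x hx]
  · rw [hm.start hx, hm'.start hx]

lemma stepProb_nonneg {p : ℝ} (hp : 0 < p ∧ p < 1) (s : ℤ) : 0 ≤ stepProb p s := by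
  unfold stepProb; split_ifs <;> linarith

lemma shift_measurable (n : ℕ) : Measurable (fun (p : ℕ → ℤ) i => p (n + i)) :=
  measurable_pi_lambda _ fun i => measurable_pi_apply _

lemma IsWalk.markov {m : Measure (ℕ → ℤ)} {e : ℤ → ℝ} {y : ℤ} (he : ∀ i, 0 < e i ∧ e i < 1)
    (hm : IsWalk m e y) {n : ℕ} {x : ℕ → ℤ} (hx : x 0 = y) (h0 : m (cyl n x) ≠ 0) :
    IsWalk ((m[|cyl n x]).map (fun p i => p (n + i))) e (x n) := by
  have := hm.prob
  have hc := cond_isProbabilityMeasure (μ := m) h0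
  refine ⟨Measure.isProbabilityMeasure_map (shift_measurable n).aemeasurable, fun k z hz => ?_⟩
  rw [Measure.map_apply (shift_measurable n) (cyl_measurable k z), cond_apply (cyl_measurable n x)]
  have hset : cyl n x ∩ (fun (p : ℕ → ℤ) i => p (n + i)) ⁻¹' (cyl k z) =
      cyl (n + k) (fun i => if i ≤ n then x i else z (i - n)) := by
    ext p
    constructor
    · rintro ⟨h1, h2⟩ i hi
      by_cases h : i ≤ n
      · simp only [h, if_true]; exact h1 i h
      · simp only [h, if_false]
        have := h2 (i - n) (by omega)
        simp only at this
        rwa [show n + (i - n) = i by omega] at this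
    · intro hp
      refine ⟨fun i hi => ?_, fun i hi => ?_⟩
      · have := hp i (by omega); simpa [hi] using this
      · have := hp (n + i) (by omega)
        simp only at this
        simp only
        rw [this]
        by_cases h : i = 0
        · subst h; simp [hz]
        · rw [if_neg (by omega)]; congr 1; omega
  rw [hset, hm.cyl_eq (n + k) _ (by simp [hx]), Finset.prod_range_add, ENNReal.ofReal_mul
    (Finset.prod_nonneg fun i _ => stepProb_nonneg (he _) _)]
  have hA : ∏ i ∈ Finset.range n, stepProb (e ((fun i => if i ≤ n then x i else z (i - n)) i))
      ((fun i => if i ≤ n then x i else z (i - n)) (i + 1) - (fun i => if i ≤ n then x i else z (i - n)) i)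
      = ∏ i ∈ Finset.range n, stepProb (e (x i)) (x (i + 1) - x i) := by
    refine Finset.prod_congr rfl fun i hi => ?_
    have := Finset.mem_range.mp hi
    simp only [show i ≤ n by omega, show i + 1 ≤ n by omega, if_true]
  have hz' : ∀ i, (if n + i ≤ n then x (n + i) else z (n + i - n)) = z i := by
    intro i
    by_cases h : i = 0
    · subst h; simp [hz]
    · rw [if_neg (by omega)]; congr 1; omega
  simp only at hA
  rw [hA, ← hm.cyl_eq n x hx]
  simp only [add_assoc, hz']
  rw [← mul_assoc, ENNReal.inv_mul_cancel h0 (measure_ne_top _ _), one_mul]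

lemma IsWalk.translate {m : Measure (ℕ → ℤ)} {e : ℤ → ℝ} {y : ℤ} (hm : IsWalk m e y) (k : ℤ) :
    IsWalk (m.map (fun p i => p i + k)) (fun i => e (i - k)) (y + k) := by
  have := hm.prob
  have hmeas : Measurable (fun (p : ℕ → ℤ) i => p i + k) :=
    measurable_pi_lambda _ fun i => (Measurable.of_discrete (f := fun z : ℤ => z + k)).comp (measurable_pi_apply i)
  refine ⟨Measure.isProbabilityMeasure_map hmeas.aemeasurable, fun n x hx => ?_⟩
  rw [Measure.map_apply hmeas (cyl_measurable n x)]
  have : (fun (p : ℕ → ℤ) i => p i + k) ⁻¹' (cyl n x) = cyl n (fun i => x i - k) := by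
    ext p
    simp only [cyl, mem_preimage, mem_ofPred_eq]
    exact forall₂_congr fun i _ => eq_sub_iff_add_eq.symm
  rw [this, hm.cyl_eq n _ (by simp [hx])]
  simp

lemma IsWalk.cyl_up {m : Measure (ℕ → ℤ)} {e : ℤ → ℝ} {y : ℤ} (hm : IsWalk m e y) :
    m (cyl 1 (fun i => y + i)) = ENNReal.ofReal (e y) := by
  rw [hm.cyl_eq 1 _ (by simp)]; simp [stepProb]

lemma IsWalk.cyl_down {m : Measure (ℕ → ℤ)} {e : ℤ → ℝ} {y : ℤ} (hm : IsWalk m e y) :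
    m (cyl 1 (fun i => y - i)) = ENNReal.ofReal (1 - e y) := by
  rw [hm.cyl_eq 1 _ (by simp)]; simp [stepProb]

lemma IsWalk.exists_all {m : Measure (ℕ → ℤ)} {e : ℤ → ℝ} (he : ∀ i, 0 < e i ∧ e i < 1)
    (hm : IsWalk m e 0) (y : ℤ) : ∃ m', IsWalk m' e y := by
  induction y using Int.induction_on with
  | zero => exact ⟨m, hm⟩
  | succ n ih =>
    obtain ⟨m', h'⟩ := ih
    have := h'.markov he (n := 1) (x := fun i => (n : ℤ) + i) (by simp) (by
      rw [h'.cyl_up]; simpa using (he _).1)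
    exact ⟨_, by simpa using this⟩
  | pred n ih =>
    obtain ⟨m', h'⟩ := ih
    have := h'.markov he (n := 1) (x := fun i => (-(n : ℤ)) - i) (by simp) (by
      rw [h'.cyl_down]; simpa using (he _).2)
    exact ⟨_, by simpa using this⟩

/-- for a shift invariant event, conditioning on a cylinder restarts the walk -/
lemma IsWalk.inter_cyl {m m' : Measure (ℕ → ℤ)} {e : ℤ → ℝ} {y : ℤ} (he : ∀ i, 0 < e i ∧ e i < 1)
    (hm : IsWalk m e y) {n : ℕ} {x : ℕ → ℤ} (hx : x 0 = y) (hm' : IsWalk m' e (x n))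
    {A : Set (ℕ → ℤ)} (hA : MeasurableSet A)
    (hinv : ∀ (n : ℕ) (p : ℕ → ℤ), (fun i => p (n + i)) ∈ A ↔ p ∈ A) :
    m (cyl n x ∩ A) = m (cyl n x) * m' A := by
  have := hm.prob
  by_cases h0 : m (cyl n x) = 0
  · rw [h0, zero_mul]; exact measure_mono_null inter_subset_left h0
  · rw [hm'.unique (hm.markov he hx h0), Measure.map_apply (shift_measurable n) hA,
      cond_apply (cyl_measurable n x), ← mul_assoc, ENNReal.mul_inv_cancel h0 (measure_ne_top _ _),
      one_mul]
    congr 1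
    ext p
    simp [hinv]

/-- all invariant events have the same probability from every starting point, equal to 0 or 1 -/
lemma IsWalk.zero_one {m : Measure (ℕ → ℤ)} {e : ℤ → ℝ} (he : ∀ i, 0 < e i ∧ e i < 1)
    (hm : IsWalk m e 0)
    (hS : ¬ Tendsto (fun n : ℕ => ∑ k ∈ Finset.range n,
      Real.log ((1 - e ((k : ℤ) + 1)) / e ((k : ℤ) + 1))) atTop atBot)
    {A : Set (ℕ → ℤ)} (hA : MeasurableSet A)
    (hinv : ∀ (n : ℕ) (p : ℕ → ℤ), (fun i => p (n + i)) ∈ A ↔ p ∈ A) :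
    (∀ y m', IsWalk m' e y → m' A = m A) ∧ (m A = 0 ∨ m A = 1) := by
  choose w hw using hm.exists_all he
  have hwp : ∀ y, IsProbabilityMeasure (w y) := fun y => (hw y).prob
  have hharm : ∀ i, (w i).real A = e i * (w (i + 1)).real A + (1 - e i) * (w (i - 1)).real A := by
    intro i
    have hC1 := cyl_measurable 1 (fun j => i + j)
    have hC2 := cyl_measurable 1 (fun j => i - j)
    have hdisj : Disjoint (cyl 1 (fun j => i + j)) (cyl 1 (fun j => i - j)) := by
      rw [Set.disjoint_left]
      intro p h1 h2
      have := h1 1 le_rfl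
      have := h2 1 le_rfl
      simp only [Nat.cast_one] at *
      omega
    have hfull : (w i).real (cyl 1 (fun j => i + j) ∪ cyl 1 (fun j => i - j)) = 1 := by
      rw [measureReal_union hdisj hC2, measureReal_def, measureReal_def, (hw i).cyl_up,
        (hw i).cyl_down, ENNReal.toReal_ofReal (he i).1.le,
        ENNReal.toReal_ofReal (by linarith [(he i).2])]
      ring
    have hnull : w i (cyl 1 (fun j => i + j) ∪ cyl 1 (fun j => i - j))ᶜ = 0 := by
      rw [prob_compl_eq_zero_iff (hC1.union hC2)]
      rw [measureReal_def, ENNReal.toReal_eq_one_iff] at hfull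
      exact hfull
    have hu : (w i).real A = (w i).real ((cyl 1 (fun j => i + j) ∩ A) ∪ (cyl 1 (fun j => i - j) ∩ A)) := by
      rw [measureReal_def, measureReal_def]
      congr 1
      rw [← union_inter_distrib_right, inter_comm]
      exact (measure_inter_conull hnull).symm
    rw [hu, measureReal_union (hdisj.mono inter_subset_left inter_subset_left) (hC2.inter hA)]
    have e1 := (hw i).inter_cyl he (n := 1) (x := fun j => i + j) (m' := w (i + 1)) (by simp)
      (by simpa using hw (i + 1)) hA hinv
    have e2 := (hw i).inter_cyl he (n := 1) (x := fun j => i - j) (m' := w (i - 1)) (by simp)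
      (by simpa using hw (i - 1)) hA hinv
    simp only [measureReal_def]
    rw [e1, e2, (hw i).cyl_up, (hw i).cyl_down, ENNReal.toReal_mul, ENNReal.toReal_mul,
      ENNReal.toReal_ofReal (he i).1.le, ENNReal.toReal_ofReal (by linarith [(he i).2])]
  have hconst := harmonic_const e (fun i => (w i).real A) he
    (fun i => ⟨measureReal_nonneg, measureReal_le_one⟩) hharm hS
  have hall : ∀ y m', IsWalk m' e y → m' A = m A := by
    intro y m' h'
    rw [h'.unique (hw y), hm.unique (hw 0)]
    have := hconst y 0
    simp only [measureReal_def] at this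
    exact (ENNReal.toReal_eq_toReal_iff' (measure_ne_top _ _) (measure_ne_top _ _)).mp this
  refine ⟨hall, ?_⟩
  have := hm.prob
  have heq : m.restrict A = (m A) • m := by
    refine ext_cyl _ _ (by simp) fun n x => ?_
    rw [Measure.restrict_apply (cyl_measurable n x), Measure.smul_apply, smul_eq_mul]
    by_cases hx : x 0 = 0
    · rw [hm.inter_cyl he hx (hw (x n)) hA hinv, hall _ _ (hw (x n)), mul_comm]
    · rw [hm.start hx, mul_zero]
      exact measure_mono_null inter_subset_left (hm.start hx)
  have h2 := congrArg (fun M => M A) heq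
  simp only [Measure.restrict_apply hA, inter_self, Measure.smul_apply, smul_eq_mul] at h2
  by_cases h0 : m A = 0
  · exact Or.inl h0
  · right
    have h3 := congrArg (fun t => (m A)⁻¹ * t) h2
    simp only [← mul_assoc, ENNReal.inv_mul_cancel h0 (measure_ne_top _ _), one_mul] at h3
    exact h3.symm

/-! ### ergodicity -/

lemma zero_one_of_mixing {Z : Type*} [mZ : MeasurableSpace Z] (P : Measure Z) [IsProbabilityMeasure P]
    (T : Z → Z) (hT : MeasurePreserving T P P) (𝒞 : Set (Set Z)) (hpi : IsPiSystem 𝒞)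
    (hgen : mZ = MeasurableSpace.generateFrom 𝒞)
    (hmix : ∀ C ∈ 𝒞, ∃ K : ℕ, ∀ k ≥ K, P (C ∩ T^[k] ⁻¹' C) = P C * P C)
    (B : Set Z) (hB : MeasurableSet B) (hinv : T ⁻¹' B =ᵐ[P] B) : P B = 0 ∨ P B = 1 := by
  have hinvn : ∀ k, T^[k] ⁻¹' B =ᵐ[P] B := by
    intro k
    induction k with
    | zero => exact ae_eq_refl _
    | succ k ih =>
      rw [Function.iterate_succ, preimage_comp]
      exact (hT.quasiMeasurePreserving.preimage_ae_eq ih).trans hinv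
  have heq : P.restrict B = (P B) • P := by
    refine ext_of_generate_finite 𝒞 hgen hpi ?_ (by simp)
    intro C hC
    have hCm : MeasurableSet C := by
      rw [hgen]; exact MeasurableSpace.measurableSet_generateFrom hC
    obtain ⟨K, hK⟩ := hmix C hC
    rw [Measure.restrict_apply hCm, Measure.smul_apply, smul_eq_mul]
    set D : ℕ → Set Z := fun i => T^[i * (K + 1)] ⁻¹' C with hD
    have hDm : ∀ i, MeasurableSet (D i) := fun i => (hT.iterate _).measurable hCm
    have hDP : ∀ i, P (D i) = P C := fun i => (hT.iterate _).measure_preimage hCm.nullMeasurableSet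
    have hind : ∀ i j, i < j → P (D i ∩ D j) = P (D i) * P (D j) := by
      intro i j hij
      have : D i ∩ D j = T^[i * (K + 1)] ⁻¹' (C ∩ T^[(j - i) * (K + 1)] ⁻¹' C) := by
        rw [preimage_inter, ← preimage_comp, ← Function.iterate_add]
        simp only [hD]
        congr 3
        rw [← add_mul]; congr 1; omega
      rw [this, (hT.iterate _).measure_preimage
        (hCm.inter ((hT.iterate _).measurable hCm)).nullMeasurableSet, hK _ ?_, hDP, hDP]
      have : 1 ≤ j - i := by omega
      nlinarith
    have hindS : ∀ i j, i ≠ j → IndepSet (D i) (D j) P := by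
      intro i j hij
      rw [indepSet_iff_measure_inter_eq_mul (hDm i) (hDm j) P]
      rcases lt_or_gt_of_ne hij with h | h
      · exact hind i j h
      · rw [inter_comm, hind j i h, mul_comm]
    let X : ℕ → Z → ℝ := fun i => (D i).indicator (fun _ => 1)
    have hXm : ∀ i, Measurable (X i) := fun i => measurable_const.indicator (hDm i)
    have hXi : ∀ i, Integrable (X i) P := fun i => (integrable_const _).indicator (hDm i)
    have hslln := strong_law_ae_real X (hXi 0) (by
      intro i j hij
      have h := hindS i j hij
      have hc : ∀ i, MeasurableSpace.comap (X i) inferInstance ≤ MeasurableSpace.generateFrom {D i} := by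
        intro i
        rw [← measurable_iff_comap_le]
        exact Measurable.indicator (m := MeasurableSpace.generateFrom {D i}) measurable_const
          (MeasurableSpace.measurableSet_generateFrom rfl)
      have h' : Indep (MeasurableSpace.generateFrom {D i}) (MeasurableSpace.generateFrom {D j}) P := h
      exact indep_of_indep_of_le_left (indep_of_indep_of_le_right h' (hc j)) (hc i)) (by
      intro i
      have : X i = X 0 ∘ T^[i * (K + 1)] := by
        ext z; simp [X, hD, indicator]; rfl
      refine ⟨(hXm i).aemeasurable, (hXm 0).aemeasurable, ?_⟩
      rw [this, ← Measure.map_map (hXm 0) (hT.iterate _).measurable, (hT.iterate _).map_eq])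
    have hE : P[X 0] = P.real C := by
      rw [integral_indicator_const _ (hDm 0), measureReal_def, hDP]; simp [measureReal_def]
    rw [hE] at hslln
    have hlim : Tendsto (fun n : ℕ => ∫ z in B, (∑ i ∈ Finset.range n, X i z) / n ∂P) atTop
        (𝓝 (∫ z in B, P.real C ∂P)) := by
      refine tendsto_integral_of_dominated_convergence (fun _ => 1) ?_ (integrable_const _) ?_
        (ae_restrict_of_ae hslln)
      · intro n
        exact ((Finset.measurable_sum _ fun i _ => hXm i).div_const _).aestronglyMeasurable
      · intro n
        refine Eventually.of_forall fun z => ?_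
        have h01 : ∀ i, 0 ≤ X i z ∧ X i z ≤ 1 := by
          intro i; simp only [X, indicator]; split_ifs <;> norm_num
        rw [Real.norm_eq_abs, abs_of_nonneg (div_nonneg (Finset.sum_nonneg fun i _ => (h01 i).1)
          (Nat.cast_nonneg _))]
        refine div_le_one_of_le₀ ?_ (Nat.cast_nonneg _)
        calc _ ≤ ∑ i ∈ Finset.range n, (1 : ℝ) := Finset.sum_le_sum fun i _ => (h01 i).2
          _ = n := by simp
    have hconst : ∀ i, ∫ z in B, X i z ∂P = P.real (C ∩ B) := by
      intro i
      rw [integral_indicator_const _ (hDm i), measureReal_restrict_apply (hDm i)]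
      simp only [smul_eq_mul, mul_one, measureReal_def]
      congr 1
      have h1 : (D i ∩ B : Set Z) =ᵐ[P] (T^[i * (K + 1)] ⁻¹' (C ∩ B) : Set Z) := by
        rw [preimage_inter]
        exact (ae_eq_refl _).inter (hinvn _).symm
      rw [measure_congr h1, (hT.iterate _).measure_preimage (hCm.inter hB).nullMeasurableSet]
    have hlim2 : Tendsto (fun n : ℕ => ∫ z in B, (∑ i ∈ Finset.range n, X i z) / n ∂P) atTop
        (𝓝 (P.real (C ∩ B))) := by
      refine tendsto_const_nhds.congr' ?_
      filter_upwards [eventually_gt_atTop 0] with n hn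
      rw [integral_div, integral_finsetSum _ (fun i _ => (hXi i).integrableOn)]
      simp only [hconst]
      have : (n : ℝ) ≠ 0 := by positivity
      simp; field_simp
    have hfin := tendsto_nhds_unique hlim2 hlim
    rw [setIntegral_const, smul_eq_mul] at hfin
    simp only [measureReal_def] at hfin
    rw [← ENNReal.toReal_mul] at hfin
    exact (ENNReal.toReal_eq_toReal_iff' (measure_ne_top _ _)
      (ENNReal.mul_ne_top (measure_ne_top _ _) (measure_ne_top _ _))).mp hfin
  have h2 := congrArg (fun M => M B) heq
  simp only [Measure.restrict_apply hB, inter_self, Measure.smul_apply, smul_eq_mul] at h2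
  by_cases h0 : P B = 0
  · exact Or.inl h0
  · right
    have h3 := congrArg (fun t => (P B)⁻¹ * t) h2
    simp only [← mul_assoc, ENNReal.inv_mul_cancel h0 (measure_ne_top _ _), one_mul] at h3
    exact h3.symm

/-- shift of a two-sided sequence -/
def tau (k : ℤ) (e : ℤ → ℝ) : ℤ → ℝ := fun i => e (i + k)

lemma tau_measurable (k : ℤ) : Measurable (tau k) :=
  measurable_pi_lambda _ fun _ => measurable_pi_apply _

lemma tau_iterate (n : ℕ) (e : ℤ → ℝ) : (tau 1)^[n] e = tau n e := by
  induction n generalizing e with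
  | zero => ext i; simp [tau]
  | succ n ih =>
    rw [Function.iterate_succ_apply, ih]
    ext i; simp [tau, add_assoc]

lemma tau_preimage (k : ℤ) (S : Finset ℤ) (t : ℤ → Set ℝ) :
    tau k ⁻¹' ((S : Set ℤ).pi t) =
      ((S.map (addRightEmbedding k) : Finset ℤ) : Set ℤ).pi (fun i => t (i - k)) := by
  ext e
  simp only [mem_preimage, Set.mem_pi, SetLike.mem_coe, Finset.mem_map, tau]
  constructor
  · rintro h _ ⟨i, hi, rfl⟩
    simpa using h i hi
  · intro h i hi
    simpa using h (i + k) ⟨i, hi, rfl⟩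

lemma tau_preserving (ν : Measure ℝ) [IsProbabilityMeasure ν] (k : ℤ) :
    MeasurePreserving (tau k) (Measure.infinitePi fun _ : ℤ => ν)
      (Measure.infinitePi fun _ : ℤ => ν) := by
  refine ⟨tau_measurable k, Measure.eq_infinitePi _ fun S t ht => ?_⟩
  rw [Measure.map_apply (tau_measurable k) (.pi S.countable_toSet fun i _ => ht i), tau_preimage,
    Measure.infinitePi_pi _ (fun i _ => ht _)]
  simp

lemma tau_mix (ν : Measure ℝ) [IsProbabilityMeasure ν] (S : Finset ℤ) (t : ℤ → Set ℝ)
    (ht : ∀ i, MeasurableSet (t i)) : ∃ K : ℕ, ∀ k : ℕ, k ≥ K →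
    (Measure.infinitePi fun _ : ℤ => ν) ((S : Set ℤ).pi t ∩ tau k ⁻¹' ((S : Set ℤ).pi t)) =
    (Measure.infinitePi fun _ : ℤ => ν) ((S : Set ℤ).pi t) *
      (Measure.infinitePi fun _ : ℤ => ν) ((S : Set ℤ).pi t) := by
  obtain ⟨M, hM⟩ : ∃ M : ℕ, ∀ i ∈ S, i.natAbs ≤ M :=
    ⟨S.sup Int.natAbs, fun i hi => Finset.le_sup (f := Int.natAbs) hi⟩
  refine ⟨2 * M + 1, fun k hk => ?_⟩
  have hdisj : Disjoint S (S.map (addRightEmbedding (k : ℤ))) := by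
    rw [Finset.disjoint_left]
    intro i hi hi'
    obtain ⟨j, hj, hji⟩ := Finset.mem_map.mp hi'
    simp only [addRightEmbedding_apply] at hji
    have := hM i hi
    have := hM j hj
    omega
  have hset : (S : Set ℤ).pi t ∩ tau k ⁻¹' ((S : Set ℤ).pi t) =
      ((S ∪ S.map (addRightEmbedding (k : ℤ)) : Finset ℤ) : Set ℤ).pi
        (fun i => if i ∈ S then t i else t (i - k)) := by
    rw [tau_preimage, Finset.coe_union, union_pi]
    congr 1
    · refine Set.pi_congr rfl fun i hi => ?_
      rw [if_pos (by simpa using hi)]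
    · refine Set.pi_congr rfl fun i hi => ?_
      rw [if_neg (fun h => Finset.disjoint_left.mp hdisj h (by exact_mod_cast hi))]
  rw [hset, Measure.infinitePi_pi _ (fun i _ => by split_ifs <;> exact ht _),
    Finset.prod_union hdisj, Measure.infinitePi_pi _ (fun i _ => ht i)]
  congr 1
  · refine Finset.prod_congr rfl fun i hi => ?_
    rw [if_pos hi]
  · rw [Finset.prod_map]
    refine Finset.prod_congr rfl fun i hi => ?_
    rw [if_neg (fun h => Finset.disjoint_left.mp hdisj h (Finset.mem_map_of_mem _ hi))]
    simp

lemma pair_zero_one (ν ν' : Measure ℝ) [IsProbabilityMeasure ν] [IsProbabilityMeasure ν']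
    (B : Set ((ℤ → ℝ) × (ℤ → ℝ))) (hB : MeasurableSet B)
    (hinv : Prod.map (tau 1) (tau 1) ⁻¹' B =ᵐ[(Measure.infinitePi fun _ : ℤ => ν).prod
      (Measure.infinitePi fun _ : ℤ => ν')] B) :
    ((Measure.infinitePi fun _ : ℤ => ν).prod (Measure.infinitePi fun _ : ℤ => ν')) B = 0 ∨
    ((Measure.infinitePi fun _ : ℤ => ν).prod (Measure.infinitePi fun _ : ℤ => ν')) B = 1 := by
  set 𝒟 : Set (Set (ℤ → ℝ)) := squareCylinders (fun _ : ℤ => {s : Set ℝ | MeasurableSet s}) with h𝒟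
  have hpi : IsPiSystem 𝒟 := isPiSystem_squareCylinders
    (fun _ => MeasurableSpace.isPiSystem_measurableSet) (fun _ => by simp)
  have hgen : MeasurableSpace.generateFrom 𝒟 = MeasurableSpace.pi := generateFrom_squareCylinders
  have hspan : IsCountablySpanning 𝒟 :=
    ⟨fun _ => univ, fun _ => ⟨∅, fun _ => univ, by simp, by simp⟩, iUnion_const _⟩
  refine zero_one_of_mixing _ _ ((tau_preserving ν 1).prod (tau_preserving ν' 1))
    (image2 (· ×ˢ ·) 𝒟 𝒟) (hpi.prod hpi) ?_ ?_ B hB hinv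
  · rw [← generateFrom_prod_eq hspan hspan, hgen]
  · rintro _ ⟨_, ⟨S, t, ht, rfl⟩, _, ⟨S', t', ht', rfl⟩, rfl⟩
    obtain ⟨K, hK⟩ := tau_mix ν S t (fun i => ht i (mem_univ i))
    obtain ⟨K', hK'⟩ := tau_mix ν' S' t' (fun i => ht' i (mem_univ i))
    refine ⟨max K K', fun k hk => ?_⟩
    have hit : (Prod.map (tau 1) (tau 1))^[k] = Prod.map (tau k) (tau k) := by
      rw [Prod.map_iterate]; congr 1 <;> ext e i <;> rw [tau_iterate]
    rw [hit, preimage_prod_map_prod, prod_inter_prod, Measure.prod_prod, Measure.prod_prod,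
      hK k (le_trans (le_max_left _ _) hk), hK' k (le_trans (le_max_right _ _) hk)]
    ring

/-! ### the potential does not tend to minus infinity -/

lemma sum_not_tendsto {Ω : Type*} [MeasurableSpace Ω] (μ : Measure Ω) [IsProbabilityMeasure μ]
    (Y : ℕ → Ω → ℝ) (hm : ∀ i, Measurable (Y i)) (hind : iIndepFun Y μ)
    (R : NNReal) (hb : ∀ i, ∀ᵐ ω ∂μ, |Y i ω| ≤ R) (h0 : ∀ i, ∫ ω, Y i ω ∂μ = 0) :
    ∀ᵐ ω ∂μ, ¬ Tendsto (fun n : ℕ => ∑ k ∈ Finset.range n, Y k ω) atTop atBot := by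
  have hsm : ∀ i, StronglyMeasurable (Y i) := fun i => (hm i).stronglyMeasurable
  have hYint : ∀ i, Integrable (Y i) μ := fun i =>
    Integrable.of_bound (hsm i).aestronglyMeasurable R (by simpa using hb i)
  let ℱ := Filtration.natural Y hsm
  let f : ℕ → Ω → ℝ := fun n ω => ∑ k ∈ Finset.range (n + 1), Y k ω
  have hYad : ∀ k n, k ≤ n → StronglyMeasurable[ℱ n] (Y k) := fun k n hkn =>
    (Filtration.stronglyAdapted_natural hsm k).mono (ℱ.mono hkn)
  have hfint : ∀ n, Integrable (f n) μ := fun n => integrable_finsetSum _ fun i _ => hYint i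
  have hfad : ∀ n, StronglyMeasurable[ℱ n] (f n) := fun n =>
    Finset.stronglyMeasurable_fun_sum _ fun k hk => hYad k n (by simpa [Nat.lt_succ_iff] using hk)
  have hmart : Martingale f ℱ μ := by
    refine martingale_nat hfad hfint fun n => ?_
    have hs : f (n + 1) = f n + Y (n + 1) := by
      ext ω; simp [f, Finset.sum_range_succ]
    rw [hs]
    have h1 := condExp_add (hfint n) (hYint (n + 1)) (ℱ n)
    have h2 := hind.condExp_natural_ae_eq_of_lt hsm (Nat.lt_succ_self n)
    have h3 := condExp_of_stronglyMeasurable (ℱ.le n) (hfad n) (hfint n)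
    filter_upwards [h1, h2] with ω a1 a2
    rw [a1, Pi.add_apply, h3, a2, h0, add_zero]
  have hbd : ∀ᵐ ω ∂μ, ∀ i, |f (i + 1) ω - f i ω| ≤ R := by
    rw [ae_all_iff]
    intro i
    filter_upwards [hb (i + 1)] with ω h
    simpa [f, Finset.sum_range_succ] using h
  filter_upwards [hmart.submartingale.bddAbove_iff_exists_tendsto hbd] with ω h ht
  have ht' : Tendsto (fun n => f n ω) atTop atBot := ht.comp (tendsto_add_atTop_nat 1)
  obtain ⟨c, hc⟩ := h.mp (by
    obtain ⟨N, hN⟩ := eventually_atTop.mp (ht'.eventually_le_atBot 0)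
    refine ⟨max 0 (∑ i ∈ Finset.range N, |f i ω|), ?_⟩
    rintro _ ⟨n, rfl⟩
    by_cases hn : N ≤ n
    · exact le_max_of_le_left (hN n hn)
    · refine le_max_of_le_right ((le_abs_self _).trans ?_)
      exact Finset.single_le_sum (f := fun i => |f i ω|) (fun i _ => abs_nonneg _)
        (Finset.mem_range.mpr (by omega)))
  exact not_tendsto_nhds_of_tendsto_atBot ht' c hc

/-! ### assembly -/

/-- the good environments, for a path kernel -/
structure GoodEnv (κ : Kernel (ℤ → ℝ) (ℕ → ℤ)) (e : ℤ → ℝ) : Prop where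
  walk : IsWalk (κ e) e 0
  ell : ∀ i, 0 < e i ∧ e i < 1
  osc : ¬ Tendsto (fun n : ℕ => ∑ k ∈ Finset.range n,
      Real.log ((1 - e ((k : ℤ) + 1)) / e ((k : ℤ) + 1))) atTop atBot

lemma stepProb_measurable (s : ℤ) : Measurable (fun p : ℝ => stepProb p s) := by
  unfold stepProb
  split_ifs
  · exact measurable_id
  · exact measurable_const.sub measurable_id
  · exact measurable_const

lemma cyl_event_measurable (c : EReal) (s : ℤ → ℝ) : MeasurableSet {p | avgLim s p = c} :=
  (avgLim_measurable.comp (measurable_const.prodMk measurable_id)) (measurableSet_singleton c)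

lemma avgLim_event_inv (c : EReal) (s : ℤ → ℝ) (n : ℕ) (p : ℕ → ℤ) :
    (fun i => p (n + i)) ∈ {p | avgLim s p = c} ↔ p ∈ {p | avgLim s p = c} := by
  simp only [Set.mem_ofPred_eq]
  rw [avgLim_shift_n]

lemma GoodEnv.shift {κ : Kernel (ℤ → ℝ) (ℕ → ℤ)} {e : ℤ → ℝ} (h : GoodEnv κ e)
    (h' : GoodEnv κ (tau 1 e)) (c : EReal) (s : ℤ → ℝ) :
    κ (tau 1 e) {p | avgLim (tau 1 s) p = c} = κ e {p | avgLim s p = c} := by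
  have hA := cyl_event_measurable c s
  have h1 := h'.walk.translate 1
  have h2 : (fun i => tau 1 e (i - 1)) = e := by ext i; simp [tau]
  rw [h2] at h1
  have hmeas : Measurable (fun (p : ℕ → ℤ) i => p i + 1) :=
    measurable_pi_lambda _ fun i =>
      (Measurable.of_discrete (f := fun z : ℤ => z + 1)).comp (measurable_pi_apply i)
  have h3 := (h.walk.zero_one h.ell h.osc hA (avgLim_event_inv c s)).1 _ _ h1
  rw [Measure.map_apply hmeas hA] at h3
  exact h3

lemma ae_good {Ω : Type*} [MeasurableSpace Ω] (μ : Measure Ω) [IsProbabilityMeasure μ]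
    (env : ℤ → Ω → ℝ) (henv_meas : ∀ i, Measurable (env i))
    (henv_indep : iIndepFun (m := fun _ : ℤ => (inferInstance : MeasurableSpace ℝ)) env μ)
    (henv_ident : ∀ i, IdentDistrib (env i) (env 0) μ μ)
    (δ : ℝ) (hδ0 : 0 < δ)
    (henv_ell : ∀ i, ∀ᵐ ω ∂μ, δ ≤ env i ω ∧ env i ω ≤ 1 - δ)
    (henv_mean : ∫ ω, Real.log ((1 - env 0 ω) / env 0 ω) ∂μ = 0)
    (X : ℕ → Ω → ℤ) (hX_meas : ∀ n, Measurable (X n))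
    (hquenched : ∀ (n : ℕ) (x : ℕ → ℤ), x 0 = 0 →
      μ[Set.indicator {ω | ∀ i ≤ n, X i ω = x i} (fun _ => (1 : ℝ)) |
          MeasurableSpace.comap (fun ω i => env i ω) MeasurableSpace.pi]
        =ᵐ[μ] fun ω => ∏ i ∈ Finset.range n, stepProb (env (x i) ω) (x (i + 1) - x i)) :
    ∀ᵐ e ∂(μ.map (fun ω i => env i ω)),
      GoodEnv (condDistrib (fun ω n => X n ω) (fun ω i => env i ω) μ) e := by
  set E : Ω → ℤ → ℝ := fun ω i => env i ω with hE
  set W : Ω → ℕ → ℤ := fun ω n => X n ω with hW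
  have hEm : Measurable E := measurable_pi_lambda _ henv_meas
  have hWm : Measurable W := measurable_pi_lambda _ hX_meas
  set κ := condDistrib W E μ with hκ
  have hell : ∀ᵐ e ∂(μ.map E), ∀ i, 0 < e i ∧ e i < 1 := by
    rw [ae_all_iff]
    intro i
    rw [ae_map_iff hEm.aemeasurable]
    · filter_upwards [henv_ell i] with ω h
      exact ⟨by linarith [h.1], by linarith [h.2]⟩
    · have hi : Measurable (fun e : ℤ → ℝ => e i) := measurable_pi_apply i
      exact hi (measurableSet_Ioo (a := (0 : ℝ)) (b := 1))
  have hφ : Measurable (fun p : ℝ => Real.log ((1 - p) / p)) :=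
    Real.measurable_log.comp ((measurable_const.sub measurable_id).div measurable_id)
  have hosc : ∀ᵐ e ∂(μ.map E), ¬ Tendsto (fun n : ℕ => ∑ k ∈ Finset.range n,
      Real.log ((1 - e ((k : ℤ) + 1)) / e ((k : ℤ) + 1))) atTop atBot := by
    rw [ae_map_iff hEm.aemeasurable]
    · refine sum_not_tendsto μ (fun k ω => Real.log ((1 - env ((k : ℤ) + 1) ω) / env ((k : ℤ) + 1) ω))
        (fun k => hφ.comp (henv_meas _)) ?_ (Real.toNNReal (-Real.log δ)) ?_ ?_
      · have h1 := henv_indep.precomp (g := fun k : ℕ => (k : ℤ) + 1) (by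
          intro a b hab; simpa using hab)
        exact h1.comp (fun _ p => Real.log ((1 - p) / p)) (fun _ => hφ)
      · intro k
        filter_upwards [henv_ell ((k : ℤ) + 1)] with ω h
        have hδl : δ ≤ 1 - env ((k : ℤ) + 1) ω := by linarith [h.2]
        rw [Real.log_div (by linarith) (by linarith [h.1])]
        have a1 := Real.log_le_log hδ0 h.1
        have a2 := Real.log_le_log hδ0 hδl
        have a3 : Real.log (env ((k : ℤ) + 1) ω) ≤ 0 :=
          Real.log_nonpos (by linarith [h.1]) (by linarith [h.2])
        have a4 : Real.log (1 - env ((k : ℤ) + 1) ω) ≤ 0 :=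
          Real.log_nonpos (by linarith [h.1]) (by linarith [h.1])
        refine le_trans ?_ (Real.le_coe_toNNReal _)
        rw [abs_le]
        constructor <;> linarith
      · intro k
        rw [← henv_mean]
        exact ((henv_ident ((k : ℤ) + 1)).comp hφ).integral_eq
    · refine (measurableSet_tendsto atBot fun n => ?_).compl
      exact Finset.measurable_sum _ fun k _ => hφ.comp (measurable_pi_apply _)
  have hcyl : ∀ᵐ e ∂(μ.map E), ∀ (n : ℕ) (l : List ℤ), l.getD 0 0 = 0 →
      κ e (cyl n (fun i => l.getD i 0)) = ENNReal.ofReal (∏ i ∈ Finset.range n,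
        stepProb (e (l.getD i 0)) (l.getD (i + 1) 0 - l.getD i 0)) := by
    simp only [ae_all_iff]
    intro n l hl
    rw [ae_map_iff hEm.aemeasurable]
    · have h1 := hquenched n (fun i => l.getD i 0) hl
      have h2 := condDistrib_ae_eq_condExp (μ := μ) hEm hWm (cyl_measurable n (fun i => l.getD i 0))
      have h3 := h2.trans h1
      filter_upwards [h3] with ω h
      rw [← h, measureReal_def, ENNReal.ofReal_toReal (measure_ne_top _ _)]
    · refine measurableSet_eq_fun (Kernel.measurable_coe κ (cyl_measurable _ _)) ?_
      refine ENNReal.measurable_ofReal.comp ?_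
      exact Finset.measurable_prod _ fun i _ =>
        (stepProb_measurable _).comp (measurable_pi_apply _)
  filter_upwards [hell, hosc, hcyl] with e h1 h2 h3
  refine ⟨⟨inferInstance, fun n x hx => ?_⟩, h1, h2⟩
  have hget : ∀ i ≤ n, ((List.range (n + 1)).map x).getD i 0 = x i := by
    intro i hi
    simp [List.getD_eq_getElem?_getD, List.getElem?_range (Nat.lt_succ_iff.mpr hi)]
  have h4 := h3 n ((List.range (n + 1)).map x) (by rw [hget 0 (Nat.zero_le _), hx])
  have h5 : cyl n (fun i => ((List.range (n + 1)).map x).getD i 0) = cyl n x := by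
    ext p
    exact forall₂_congr fun i hi => by simp only [hget i hi]
  rw [h5] at h4
  rw [h4]
  congr 1
  refine Finset.prod_congr rfl fun i hi => ?_
  have := Finset.mem_range.mp hi
  rw [hget i (by omega), hget (i + 1) (by omega)]

/-- Zero–one law: if `a := ess sup ξ₀ < ∞`, then for every `c ∈ [−∞, +∞]`, the
probability `ℙ⊗Q{limsup_{n→∞} Z_n/n = c}` is `0` or `1`. -/
theorem stmt19 {Ω : Type*} [MeasurableSpace Ω] (μ : Measure Ω) [IsProbabilityMeasure μ]
    -- the i.i.d. environment
    (env : ℤ → Ω → ℝ) (henv_meas : ∀ i, Measurable (env i))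
    (henv_indep : iIndepFun (m := fun _ : ℤ => (inferInstance : MeasurableSpace ℝ)) env μ)
    (henv_ident : ∀ i, IdentDistrib (env i) (env 0) μ μ)
    (δ : ℝ) (hδ0 : 0 < δ) (hδ1 : δ < 1 / 2)
    (henv_ell : ∀ i, ∀ᵐ ω ∂μ, δ ≤ env i ω ∧ env i ω ≤ 1 - δ)
    (henv_mean : ∫ ω, Real.log ((1 - env 0 ω) / env 0 ω) ∂μ = 0)
    (henv_var : 0 < variance (fun ω => Real.log ((1 - env 0 ω) / env 0 ω)) μ)
    -- Sinai's walk: a nearest-neighbour Markov chain in the environment `env`,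
    -- characterized by its quenched cylinder probabilities given `σ(env)`
    (X : ℕ → Ω → ℤ) (hX_meas : ∀ n, Measurable (X n))
    (hX0 : ∀ᵐ ω ∂μ, X 0 ω = 0)
    (hquenched : ∀ (n : ℕ) (x : ℕ → ℤ), x 0 = 0 →
      μ[Set.indicator {ω | ∀ i ≤ n, X i ω = x i} (fun _ => (1 : ℝ)) |
          MeasurableSpace.comap (fun ω i => env i ω) MeasurableSpace.pi]
        =ᵐ[μ] fun ω => ∏ i ∈ Finset.range n, stepProb (env (x i) ω) (x (i + 1) - x i))
    -- the i.i.d. scenery, independent of the environment and of the walk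
    (sce : ℤ → Ω → ℝ) (hsce_meas : ∀ x, Measurable (sce x))
    (hsce_indep : iIndepFun (m := fun _ : ℤ => (inferInstance : MeasurableSpace ℝ)) sce μ)
    (hsce_ident : ∀ x, IdentDistrib (sce x) (sce 0) μ μ)
    (hsce_env_walk_indep :
      IndepFun (fun ω => (fun x : ℤ => sce x ω))
        (fun ω => ((fun i : ℤ => env i ω), (fun n : ℕ => X n ω))) μ)
    -- `a := ess sup ξ₀ < ∞`
    (a : ℝ) (ha : a = essSup (fun ω => sce 0 ω) μ) (ha_fin : ∀ᵐ ω ∂μ, sce 0 ω ≤ a) :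
    ∀ c : EReal,
      μ {ω | Filter.atTop.limsup
          (fun n : ℕ =>
            (((∑ i ∈ Finset.range (n + 1), sce (X i ω) ω) / (n : ℝ) : ℝ) : EReal)) = c}
        = 0 ∨
      μ {ω | Filter.atTop.limsup
          (fun n : ℕ =>
            (((∑ i ∈ Finset.range (n + 1), sce (X i ω) ω) / (n : ℝ) : ℝ) : EReal)) = c}
        = 1 := by
  intro c
  set E : Ω → ℤ → ℝ := fun ω i => env i ω with hE
  set W : Ω → ℕ → ℤ := fun ω n => X n ω with hW
  set S : Ω → ℤ → ℝ := fun ω x => sce x ω with hS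
  have hEm : Measurable E := measurable_pi_lambda _ henv_meas
  have hWm : Measurable W := measurable_pi_lambda _ hX_meas
  have hSm : Measurable S := measurable_pi_lambda _ hsce_meas
  set κ := condDistrib W E μ with hκ
  have hgood : ∀ᵐ e ∂(μ.map E), GoodEnv κ e :=
    ae_good μ env henv_meas henv_indep henv_ident δ hδ0 henv_ell henv_mean X hX_meas hquenched
  have hν : IsProbabilityMeasure (μ.map (env 0)) :=
    Measure.isProbabilityMeasure_map (henv_meas 0).aemeasurable
  have hν' : IsProbabilityMeasure (μ.map (sce 0)) :=
    Measure.isProbabilityMeasure_map (hsce_meas 0).aemeasurable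
  have hPe : μ.map E = Measure.infinitePi (fun _ : ℤ => μ.map (env 0)) := by
    rw [hE, henv_indep.map_fun_eq_infinitePi_map henv_meas]
    congr 1; ext1 i; exact (henv_ident i).map_eq
  have hPs : μ.map S = Measure.infinitePi (fun _ : ℤ => μ.map (sce 0)) := by
    rw [hS, hsce_indep.map_fun_eq_infinitePi_map hsce_meas]
    congr 1; ext1 i; exact (hsce_ident i).map_eq
  have hpE : IsProbabilityMeasure (μ.map E) := Measure.isProbabilityMeasure_map hEm.aemeasurable
  have hpS : IsProbabilityMeasure (μ.map S) := Measure.isProbabilityMeasure_map hSm.aemeasurable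
  set P := (μ.map S).prod (μ.map E) with hP
  -- the quenched probability of the event
  let g : (ℤ → ℝ) × (ℤ → ℝ) → ℝ≥0∞ := fun q => κ q.2 {p | avgLim q.1 p = c}
  have hAm : MeasurableSet {q : ((ℤ → ℝ) × (ℤ → ℝ)) × (ℕ → ℤ) | avgLim q.1.1 q.2 = c} :=
    (avgLim_measurable.comp ((measurable_fst.comp measurable_fst).prodMk measurable_snd))
      (measurableSet_singleton c)
  have hgm : Measurable g :=
    Kernel.measurable_kernel_prodMk_left (κ := κ.comap Prod.snd measurable_snd) hAm
  have hgood2 : ∀ᵐ q ∂P, GoodEnv κ q.2 ∧ GoodEnv κ (tau 1 q.2) := by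
    have h1 : ∀ᵐ e ∂(μ.map E), GoodEnv κ (tau 1 e) := by
      rw [hPe] at hgood ⊢
      exact (tau_preserving (μ.map (env 0)) 1).quasiMeasurePreserving.ae hgood
    exact Measure.quasiMeasurePreserving_snd.ae (hgood.and h1)
  have hg01 : ∀ᵐ q ∂P, g q = 0 ∨ g q = 1 := by
    filter_upwards [hgood2] with q hq
    exact (hq.1.walk.zero_one hq.1.ell hq.1.osc (cyl_event_measurable c q.1)
      (avgLim_event_inv c q.1)).2
  set B : Set ((ℤ → ℝ) × (ℤ → ℝ)) := g ⁻¹' {1} with hB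
  have hBm : MeasurableSet B := hgm (measurableSet_singleton 1)
  have hinv : Prod.map (tau 1) (tau 1) ⁻¹' B =ᵐ[P] B := by
    filter_upwards [hgood2] with q hq
    have : g (Prod.map (tau 1) (tau 1) q) = g q := hq.1.shift hq.2 c q.1
    apply propext
    change g (Prod.map (tau 1) (tau 1) q) = 1 ↔ g q = 1
    rw [this]
  have h01 : P B = 0 ∨ P B = 1 := by
    rw [hP, hPs, hPe] at hinv ⊢
    exact pair_zero_one _ _ B hBm hinv
  have hlaw : μ.map (fun ω => (S ω, (E ω, W ω))) = (μ.map S).prod ((μ.map E) ⊗ₘ κ) := by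
    rw [hκ, compProd_map_condDistrib hWm.aemeasurable]
    exact (indepFun_iff_map_prod_eq_prod_map_map hSm.aemeasurable
      (hEm.prodMk hWm).aemeasurable).mp hsce_env_walk_indep
  have hFm : MeasurableSet {q : (ℤ → ℝ) × ((ℤ → ℝ) × (ℕ → ℤ)) | avgLim q.1 q.2.2 = c} :=
    (avgLim_measurable.comp (measurable_fst.prodMk (measurable_snd.comp measurable_snd)))
      (measurableSet_singleton c)
  have hmain : μ {ω | avgLim (S ω) (W ω) = c} = P B := by
    have h1 : μ {ω | avgLim (S ω) (W ω) = c} = μ.map (fun ω => (S ω, (E ω, W ω)))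
        {q | avgLim q.1 q.2.2 = c} := by
      rw [Measure.map_apply (hSm.prodMk (hEm.prodMk hWm)) hFm]; rfl
    rw [h1, hlaw, Measure.prod_apply hFm]
    have h2 : ∀ s : ℤ → ℝ, ((μ.map E) ⊗ₘ κ) (Prod.mk s ⁻¹' {q | avgLim q.1 q.2.2 = c}) =
        ∫⁻ e, g (s, e) ∂(μ.map E) := by
      intro s
      rw [Measure.compProd_apply (measurable_prodMk_left hFm)]
      rfl
    simp_rw [h2]
    rw [← lintegral_prod _ hgm.aemeasurable, ← lintegral_indicator_one hBm]
    refine lintegral_congr_ae ?_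
    filter_upwards [hg01] with q hq
    rcases hq with h | h
    · rw [h, indicator_of_notMem]
      change ¬ g q = 1
      rw [h]; exact zero_ne_one
    · rw [h, indicator_of_mem (show q ∈ B from h)]; rfl
  have hfinal : μ {ω | avgLim (S ω) (W ω) = c} = 0 ∨ μ {ω | avgLim (S ω) (W ω) = c} = 1 := by
    rw [hmain]; exact h01
  exact hfinal
end
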